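/- arXiv:1812.04409 — 5 statements merged into one kernel-verified Lean document; each statement's English description precedes it below -/
import Mathlib

section
/- Let j : ℝ → ℝ be a continuously differentiable function with j(t) > 0 for all t ∈ ℝ, and suppose there is a constant a > 0 such that |j'(t)| ≤ a·j(t) for all t ∈ ℝ. Define u(t) = j'(t)/j(t). Then limsup_{T→+∞} (1/T)·log √(j(T)² + j'(T)²) = limsup_{T→+∞} (1/T)·∫₀^T u(t) dt. -/
open Filter Real

lemma aux_limsup_add_le (f d : ℝ → ℝ) (C : ℝ) (hf : ∀ᶠ T in atTop, |f T| ≤ C)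
    (hd : Tendsto d atTop (nhds 0)) :
    limsup (f + d) atTop ≤ limsup f atTop := by
  have h1 : IsBoundedUnder (· ≥ ·) atTop f :=
    ⟨-C, by rw [eventually_map]; filter_upwards [hf] with T hT using (abs_le.1 hT).1⟩
  have h2 : IsBoundedUnder (· ≤ ·) atTop f :=
    ⟨C, by rw [eventually_map]; filter_upwards [hf] with T hT using (abs_le.1 hT).2⟩
  have := limsup_add_le h1 h2 hd.isBoundedUnder_ge.isCoboundedUnder_le hd.isBoundedUnder_le
  rwa [hd.limsup_eq, add_zero] at this

lemma aux_limsup_eq (f g : ℝ → ℝ) (C : ℝ) (hf : ∀ᶠ T in atTop, |f T| ≤ C)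
    (hd : Tendsto (fun T => g T - f T) atTop (nhds 0)) :
    limsup g atTop = limsup f atTop := by
  apply le_antisymm
  · have := aux_limsup_add_le f (fun T => g T - f T) C hf hd
    rwa [show f + (fun T => g T - f T) = g by ext T; simp] at this
  · have hd' : Tendsto (fun T => f T - g T) atTop (nhds 0) := by
      simpa using hd.neg
    have hg : ∀ᶠ T in atTop, |g T| ≤ C + 1 := by
      have h1 : ∀ᶠ T in atTop, |g T - f T| < 1 := by
        have := hd.abs
        rw [abs_zero] at this
        exact this.eventually (gt_mem_nhds one_pos)
      filter_upwards [hf, h1] with T h2 h3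
      have := abs_add_le (f T) (g T - f T)
      rw [add_sub_cancel] at this
      linarith
    have := aux_limsup_add_le g (fun T => f T - g T) (C + 1) hg hd'
    rwa [show g + (fun T => f T - g T) = f by ext T; simp] at this

/-- For a `C¹` positive function `j` with `|j'| ≤ a·j`, the exponential growth
rate of `√(j(T)² + j'(T)²)` equals the limsup of the time averages of
`u = j'/j`. -/
theorem lyapunov_exponent_eq_limsup_riccati
    (j : ℝ → ℝ) (hj : ContDiff ℝ 1 j)
    (hpos : ∀ t, 0 < j t)
    (a : ℝ) (ha : 0 < a)
    (hbound : ∀ t, |deriv j t| ≤ a * j t) :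
    limsup (fun T : ℝ =>
        Real.log (Real.sqrt ((j T) ^ 2 + (deriv j T) ^ 2)) / T) atTop
      = limsup (fun T : ℝ =>
        (∫ t in (0:ℝ)..T, deriv j t / j t) / T) atTop := by
  have hcont : Continuous (fun t => deriv j t / j t) :=
    (hj.continuous_deriv le_rfl).div hj.continuous (fun t => (hpos t).ne')
  have hint : ∀ T : ℝ, ∫ t in (0:ℝ)..T, deriv j t / j t = Real.log (j T) - Real.log (j 0) := by
    intro T
    apply intervalIntegral.integral_eq_sub_of_hasDerivAt (f := fun t => Real.log (j t))
    · intro t _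
      exact ((hj.differentiable one_ne_zero) t).hasDerivAt.log (hpos t).ne'
    · exact hcont.intervalIntegrable _ _
  apply aux_limsup_eq _ _ a
  · filter_upwards [eventually_gt_atTop 0] with T hT
    rw [abs_div, abs_of_pos hT, div_le_iff₀ hT]
    have := intervalIntegral.norm_integral_le_of_norm_le_const (a := 0) (b := T) (C := a)
      (f := fun t => deriv j t / j t) (fun t _ => by
        rw [Real.norm_eq_abs, abs_div, abs_of_pos (hpos t), div_le_iff₀ (hpos t)]
        exact hbound t)
    rwa [sub_zero, abs_of_pos hT, Real.norm_eq_abs] at this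
  · have hb : ∀ T : ℝ, |Real.log (Real.sqrt ((j T) ^ 2 + (deriv j T) ^ 2)) -
        ∫ t in (0:ℝ)..T, deriv j t / j t| ≤ Real.log (1 + a) + |Real.log (j 0)| := by
      intro T
      have hp := hpos T
      have h1 : j T ≤ Real.sqrt ((j T) ^ 2 + (deriv j T) ^ 2) :=
        Real.le_sqrt_of_sq_le (by nlinarith [sq_nonneg (deriv j T)])
      have h2 : Real.sqrt ((j T) ^ 2 + (deriv j T) ^ 2) ≤ (1 + a) * j T := by
        apply Real.sqrt_le_iff.2
        refine ⟨by positivity, ?_⟩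
        have h3 : (deriv j T) ^ 2 ≤ (a * j T) ^ 2 :=
          sq_le_sq' (abs_le.1 (hbound T)).1 (abs_le.1 (hbound T)).2
        have : 0 < a * j T * j T := by positivity
        nlinarith
      have h3 := Real.log_le_log hp h1
      have h4 := Real.log_le_log (hp.trans_le h1) h2
      rw [Real.log_mul (by positivity) hp.ne'] at h4
      rw [hint, abs_le]
      have h5 := neg_abs_le (Real.log (j 0))
      have h6 := le_abs_self (Real.log (j 0))
      have h7 : 0 ≤ Real.log (1 + a) := Real.log_nonneg (by linarith)
      constructor <;> linarith
    apply squeeze_zero_norm' (a := fun T => (Real.log (1 + a) + |Real.log (j 0)|) / T)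
    · filter_upwards [eventually_gt_atTop 0] with T hT
      rw [← sub_div, Real.norm_eq_abs, abs_div, abs_of_pos hT]
      exact div_le_div_of_nonneg_right (hb T) hT.le
    · exact tendsto_const_nhds.div_atTop tendsto_id
end

section
/- For every δ > 0 and σ > 0 there exists a constant c > 0, depending only on δ and σ, with the following property: if t₀ ∈ ℝ, u : ℝ → ℝ is differentiable on [t₀, t₀+σ], K : ℝ → ℝ is a function with u'(t) = −u(t)² − K(t) for all t ∈ [t₀, t₀+σ], u(t) ≤ 0 for all t ∈ [t₀, t₀+σ], and K(t) ≤ −δ for all t ∈ [t₀, t₀+σ], then u(t₀) ≤ −c. -/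
open Set

/-- Quantitative Riccati estimate: if the curvature is at most `−δ` on a time
interval of length `σ` and the Riccati solution is nonpositive there, then at
the beginning of the interval the solution is at most `−c`, where `c > 0`
depends only on `δ` and `σ`. -/
theorem riccati_neg_curvature_bound
    (δ σ : ℝ) (hδ : 0 < δ) (hσ : 0 < σ) :
    ∃ c : ℝ, 0 < c ∧
      ∀ (t₀ : ℝ) (u K : ℝ → ℝ),
        (∀ t ∈ Icc t₀ (t₀ + σ), HasDerivAt u (-(u t) ^ 2 - K t) t) →
        (∀ t ∈ Icc t₀ (t₀ + σ), u t ≤ 0) →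
        (∀ t ∈ Icc t₀ (t₀ + σ), K t ≤ -δ) →
        u t₀ ≤ -c := by
  have hs : 0 < √δ := Real.sqrt_pos.mpr hδ
  have hsq : √δ ^ 2 = δ := Real.sq_sqrt hδ.le
  have hds : 0 < δ * σ := mul_pos hδ hσ
  refine ⟨min (√δ / 2) (δ * σ / 4), lt_min (by positivity) (by positivity), ?_⟩
  intro t₀ u K hu hneg hK
  have hc1 : min (√δ / 2) (δ * σ / 4) ≤ √δ / 2 := min_le_left _ _
  have hc2 : min (√δ / 2) (δ * σ / 4) ≤ δ * σ / 4 := min_le_right _ _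
  generalize min (√δ / 2) (δ * σ / 4) = c at hc1 hc2
  by_contra hcon
  push Not at hcon
  have hB : ∀ x : ℝ, HasDerivAt (fun t => c - δ / 2 * (t - t₀)) (-(δ / 2)) x := by
    intro x
    have h := (((hasDerivAt_id x).sub_const t₀).const_mul (δ / 2)).const_sub c
    simpa using h
  have key := image_le_of_deriv_right_lt_deriv_boundary
    (f := fun t => -u t) (f' := fun t => -(-(u t) ^ 2 - K t)) (a := t₀) (b := t₀ + σ)
    (B := fun t => c - δ / 2 * (t - t₀)) (B' := fun _ => -(δ / 2))
    (fun x hx => (hu x hx).neg.continuousAt.continuousWithinAt)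
    (fun x hx => (hu x ⟨hx.1, hx.2.le⟩).neg.hasDerivWithinAt)
    (by simp only [sub_self, mul_zero, sub_zero]; linarith)
    hB
    (by
      intro x hx he
      have hx' : x ∈ Icc t₀ (t₀ + σ) := ⟨hx.1, hx.2.le⟩
      have h1 := hneg x hx'
      have h2 := hK x hx'
      have h3 : 0 ≤ δ / 2 * (x - t₀) := mul_nonneg (by positivity) (by linarith [hx.1])
      have h4 : -u x ≤ √δ / 2 := by linarith
      have h5 : (-u x) ^ 2 ≤ (√δ / 2) ^ 2 := pow_le_pow_left₀ (by linarith) h4 2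
      nlinarith)
  have hend : t₀ + σ ∈ Icc t₀ (t₀ + σ) := ⟨by linarith, le_rfl⟩
  have h6 := key hend
  have h7 := hneg _ hend
  simp only [add_sub_cancel_left] at h6
  linarith
end

section
/- Let δ > 0, let a < b be real numbers, let u : ℝ → ℝ be differentiable on [a,b], and let K : ℝ → ℝ satisfy u'(t) = −u(t)² − K(t) for all t ∈ [a,b]. Suppose u(t) ≤ 0 for all t ∈ [a,b], K(t) ≤ −δ for all t ∈ [a,b], and u(a)² < δ. Then u is strictly monotonically increasing on [a,b]. -/
open Set

/-- On an interval where the curvature is at most `−δ`, a nonpositive Riccati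
solution starting with `u(a)² < δ` is strictly increasing. -/
theorem riccati_strictMonoOn
    (δ : ℝ) (hδ : 0 < δ) (a b : ℝ) (hab : a < b)
    (u K : ℝ → ℝ)
    (hderiv : ∀ t ∈ Icc a b, HasDerivAt u (-(u t) ^ 2 - K t) t)
    (hu : ∀ t ∈ Icc a b, u t ≤ 0)
    (hK : ∀ t ∈ Icc a b, K t ≤ -δ)
    (hini : (u a) ^ 2 < δ) :
    StrictMonoOn u (Icc a b) := by
  have hge : ∀ ⦃t⦄, t ∈ Icc a b → -u t ≤ -u a := by
    refine image_le_of_deriv_right_lt_deriv_boundary (f := fun t => -u t)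
      (f' := fun t => -(-(u t) ^ 2 - K t)) (B := fun _ => -u a) (B' := fun _ => 0)
      (fun t ht => (hderiv t ht).neg.continuousAt.continuousWithinAt)
      (fun t ht => (hderiv t (Ico_subset_Icc_self ht)).neg.hasDerivWithinAt)
      le_rfl (fun t => hasDerivAt_const t _) ?_
    intro t ht h
    have h1 : u t = u a := neg_injective h
    have h2 := hK t (Ico_subset_Icc_self ht)
    show -(-(u t) ^ 2 - K t) < 0
    rw [h1]
    linarith
  refine strictMonoOn_of_deriv_pos (convex_Icc a b)
    (fun t ht => (hderiv t ht).continuousAt.continuousWithinAt) ?_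
  intro t ht
  have ht' := interior_subset ht
  rw [(hderiv t ht').deriv]
  have h1 := hge ht'
  have h2 := hu t ht'
  have h3 := hK t ht'
  have h4 : (u t) ^ 2 ≤ (u a) ^ 2 := by nlinarith
  linarith
end

section
/- Let u : ℝ → ℝ be differentiable and let K : ℝ → ℝ satisfy u'(t) = −u(t)² − K(t) for all t ∈ ℝ. Suppose u(t) ≤ 0 for all t ∈ ℝ, K(t) ≥ 0 for all t ∈ ℝ, and there is a constant a > 0 with |u(t)| ≤ a for all t ∈ ℝ. Then u(t) = 0 and K(t) = 0 for all t ∈ ℝ. -/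
/-- Rigidity for the Riccati equation: a bounded nonpositive solution of
`u' = −u² − K` with `K ≥ 0` everywhere must vanish identically, and then
`K` vanishes identically as well. -/
theorem riccati_rigidity
    (u K : ℝ → ℝ)
    (hderiv : ∀ t : ℝ, HasDerivAt u (-(u t) ^ 2 - K t) t)
    (hu : ∀ t : ℝ, u t ≤ 0)
    (hK : ∀ t : ℝ, 0 ≤ K t)
    (a : ℝ) (ha : 0 < a)
    (hbound : ∀ t : ℝ, |u t| ≤ a) :
    ∀ t : ℝ, u t = 0 ∧ K t = 0 := by
  have hanti : Antitone u := by
    apply antitone_of_deriv_nonpos (fun t => (hderiv t).differentiableAt)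
    intro t
    rw [(hderiv t).deriv]
    nlinarith [sq_nonneg (u t), hK t]
  have hzero : ∀ t, u t = 0 := by
    intro t
    by_contra hne
    have hlt : u t < 0 := lt_of_le_of_ne (hu t) hne
    have hsq : 0 < (u t) ^ 2 := by positivity
    have hT : 0 < (a + 1) / (u t) ^ 2 := by positivity
    obtain ⟨c, hc, hslope⟩ := exists_hasDerivAt_eq_slope u (fun s => -(u s) ^ 2 - K s)
      (show t < t + (a + 1) / (u t) ^ 2 by linarith)
      (fun s _ => (hderiv s).continuousAt.continuousWithinAt) (fun s _ => hderiv s)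
    have h1 : u c ≤ u t := hanti hc.1.le
    have h2 : (u t) ^ 2 ≤ (u c) ^ 2 := by nlinarith
    rw [add_sub_cancel_left, eq_div_iff hT.ne'] at hslope
    have h3 : (u t) ^ 2 * ((a + 1) / (u t) ^ 2) = a + 1 := by field_simp
    have h4 : (u t) ^ 2 * ((a + 1) / (u t) ^ 2) ≤
        ((u c) ^ 2 + K c) * ((a + 1) / (u t) ^ 2) :=
      mul_le_mul_of_nonneg_right (by linarith [hK c]) hT.le
    have h5 := (abs_le.mp (hbound (t + (a + 1) / (u t) ^ 2))).1
    linarith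
  intro t
  refine ⟨hzero t, ?_⟩
  have hd := hderiv t
  have hu0 : u = fun _ => (0 : ℝ) := funext hzero
  have h0 : HasDerivAt u 0 t := by
    rw [hu0]
    exact hasDerivAt_const t 0
  have h := hd.unique h0
  rw [hzero t] at h
  linarith
end

section
/- Let X be a metric space and let φ : ℝ × X → X be a continuous flow on X (φ(0,x) = x and φ(s, φ(t,x)) = φ(s+t, x) for all s,t ∈ ℝ, x ∈ X; write φ_t(x) = φ(t,x)). Let ε₀ > 0, let (p_k) and (q_k) be sequences in X, and let (s_k) be a sequence of real numbers with s_k → +∞ such that for every k: d(φ_{s_k}(p_k), φ_{s_k}(q_k)) = ε₀ and d(φ_s(p_k), φ_s(q_k)) ≤ ε₀ for all s ∈ [0, s_k]. Suppose φ_{s_k}(p_k) → a and φ_{s_k}(q_k) → b as k → ∞. Then d(a,b) = ε₀ and d(φ_t(a), φ_t(b)) ≤ ε₀ for every t ≤ 0. -/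
open Filter Set

/-- Limits of pairs of orbit segments that stay `ε₀`-close for longer and
longer times and first separate to distance exactly `ε₀` give points `a, b`
at distance exactly `ε₀` whose backward orbits remain within distance `ε₀`. -/
theorem flow_limit_backward_close
    {X : Type*} [MetricSpace X]
    (φ : ℝ → X → X)
    (hcont : Continuous fun p : ℝ × X => φ p.1 p.2)
    (h0 : ∀ x, φ 0 x = x)
    (hadd : ∀ s t x, φ s (φ t x) = φ (s + t) x)
    (ε₀ : ℝ) (hε₀ : 0 < ε₀)
    (p q : ℕ → X) (s : ℕ → ℝ)
    (hs : Tendsto s atTop atTop)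
    (hsep : ∀ k, dist (φ (s k) (p k)) (φ (s k) (q k)) = ε₀)
    (hclose : ∀ k, ∀ t ∈ Icc (0:ℝ) (s k), dist (φ t (p k)) (φ t (q k)) ≤ ε₀)
    (a b : X)
    (hpa : Tendsto (fun k => φ (s k) (p k)) atTop (nhds a))
    (hqb : Tendsto (fun k => φ (s k) (q k)) atTop (nhds b)) :
    dist a b = ε₀ ∧ ∀ t : ℝ, t ≤ 0 → dist (φ t a) (φ t b) ≤ ε₀ := by
  constructor
  · have h := hpa.dist hqb
    simp only [hsep] at h
    exact tendsto_nhds_unique h tendsto_const_nhds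
  · intro t ht
    have hc : Continuous (φ t) := hcont.comp (Continuous.prodMk_right t)
    have h := ((hc.tendsto a).comp hpa).dist ((hc.tendsto b).comp hqb)
    refine le_of_tendsto h ?_
    filter_upwards [hs.eventually_ge_atTop (-t)] with k hk
    simp only [Function.comp_apply, hadd]
    exact hclose k _ ⟨by linarith, by linarith⟩
end
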